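/- Let M : ℝ² → ℝ be a smooth, nowhere-vanishing function of (y,T) satisfying the RKdV equation M_T + (M³(M_yy − 1))_y = 0, let λ ∈ ℝ, and let Φ : ℝ² → ℝ be a smooth function satisfying Φ_yy = −(M_y/M)Φ_y + ((M − λ)/M²)Φ at every point of ℝ². Then the function W := Φ_T − (M²·M_yy + M·M_y² − M² + 4λM)Φ_y + M·M_y·Φ also satisfies W_yy = −(M_y/M)W_y + ((M − λ)/M²)W at every point of ℝ². -/

import Mathlib

noncomputable section

/-- Partial derivative of `f` with respect to its first argument. -/
def d1 (f : ℝ → ℝ → ℝ) : ℝ → ℝ → ℝ := fun a b => deriv (fun a' => f a' b) a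

/-- Partial derivative of `f` with respect to its second argument. -/
def d2 (f : ℝ → ℝ → ℝ) : ℝ → ℝ → ℝ := fun a b => deriv (fun b' => f a b') b

/-- Smoothness of a two-variable real function. -/
def Smooth2 (f : ℝ → ℝ → ℝ) : Prop := ContDiff ℝ (⊤ : ℕ∞) (fun p : ℝ × ℝ => f p.1 p.2)

theorem aux_h1 {f : ℝ → ℝ → ℝ} (hf : Smooth2 f) (y T : ℝ) :
    HasDerivAt (fun a => f a T) (d1 f y T) y := by
  have h : Differentiable ℝ (fun p : ℝ × ℝ => f p.1 p.2) := ContDiff.differentiable hf (by simp)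
  have h2 : DifferentiableAt ℝ (fun a => f a T) y :=
    (h (y, T)).comp y (f := fun a : ℝ => (a, T)) (by fun_prop)
  exact h2.hasDerivAt

theorem aux_h2 {f : ℝ → ℝ → ℝ} (hf : Smooth2 f) (y T : ℝ) :
    HasDerivAt (fun b => f y b) (d2 f y T) T := by
  have h : Differentiable ℝ (fun p : ℝ × ℝ => f p.1 p.2) := ContDiff.differentiable hf (by simp)
  have h2 : DifferentiableAt ℝ (fun b => f y b) T :=
    (h (y, T)).comp T (f := fun b : ℝ => (y, b)) (by fun_prop)
  exact h2.hasDerivAt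

theorem aux_e1 {f : ℝ → ℝ → ℝ} (hf : Smooth2 f) (y T : ℝ) :
    d1 f y T = fderiv ℝ (fun p : ℝ × ℝ => f p.1 p.2) (y, T) (1, 0) := by
  have h : Differentiable ℝ (fun p : ℝ × ℝ => f p.1 p.2) := ContDiff.differentiable hf (by simp)
  have hg : HasDerivAt (fun a : ℝ => (a, T)) ((1 : ℝ), (0 : ℝ)) y :=
    (hasDerivAt_id y).prodMk (hasDerivAt_const y T)
  exact ((h (y, T)).hasFDerivAt.comp_hasDerivAt y hg).deriv

theorem aux_e2 {f : ℝ → ℝ → ℝ} (hf : Smooth2 f) (y T : ℝ) :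
    d2 f y T = fderiv ℝ (fun p : ℝ × ℝ => f p.1 p.2) (y, T) (0, 1) := by
  have h : Differentiable ℝ (fun p : ℝ × ℝ => f p.1 p.2) := ContDiff.differentiable hf (by simp)
  have hg : HasDerivAt (fun b : ℝ => (y, b)) ((0 : ℝ), (1 : ℝ)) T :=
    (hasDerivAt_const T y).prodMk (hasDerivAt_id T)
  exact ((h (y, T)).hasFDerivAt.comp_hasDerivAt T hg).deriv

theorem aux_fd {f : ℝ → ℝ → ℝ} (hf : Smooth2 f) :
    ContDiff ℝ (⊤ : ℕ∞) (fderiv ℝ (fun p : ℝ × ℝ => f p.1 p.2)) :=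
  ContDiff.fderiv_right hf (by simp)

theorem aux_s1 {f : ℝ → ℝ → ℝ} (hf : Smooth2 f) : Smooth2 (d1 f) := by
  have : (fun p : ℝ × ℝ => d1 f p.1 p.2)
      = fun p => fderiv ℝ (fun p : ℝ × ℝ => f p.1 p.2) p (1, 0) := by
    funext p; exact aux_e1 hf p.1 p.2
  unfold Smooth2
  rw [this]
  exact (aux_fd hf).clm_apply contDiff_const

theorem aux_s2 {f : ℝ → ℝ → ℝ} (hf : Smooth2 f) : Smooth2 (d2 f) := by
  have : (fun p : ℝ × ℝ => d2 f p.1 p.2)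
      = fun p => fderiv ℝ (fun p : ℝ × ℝ => f p.1 p.2) p (0, 1) := by
    funext p; exact aux_e2 hf p.1 p.2
  unfold Smooth2
  rw [this]
  exact (aux_fd hf).clm_apply contDiff_const

theorem aux_comm {f : ℝ → ℝ → ℝ} (hf : Smooth2 f) (y T : ℝ) :
    d1 (d2 f) y T = d2 (d1 f) y T := by
  have hd : Differentiable ℝ (fderiv ℝ (fun p : ℝ × ℝ => f p.1 p.2)) :=
    (aux_fd hf).differentiable (by simp)
  rw [aux_e1 (aux_s2 hf), aux_e2 (aux_s1 hf)]
  have e1 : (fun p : ℝ × ℝ => d1 f p.1 p.2)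
      = fun p => fderiv ℝ (fun p : ℝ × ℝ => f p.1 p.2) p (1, 0) := by
    funext p; exact aux_e1 hf p.1 p.2
  have e2 : (fun p : ℝ × ℝ => d2 f p.1 p.2)
      = fun p => fderiv ℝ (fun p : ℝ × ℝ => f p.1 p.2) p (0, 1) := by
    funext p; exact aux_e2 hf p.1 p.2
  rw [e1, e2, fderiv_clm_apply (hd _) (by fun_prop), fderiv_clm_apply (hd _) (by fun_prop)]
  have hs : IsSymmSndFDerivAt ℝ (fun p : ℝ × ℝ => f p.1 p.2) (y, T) :=
    (ContDiff.contDiffAt hf).isSymmSndFDerivAt (by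
      simp only [minSmoothness_of_isRCLikeNormedField]
      exact WithTop.coe_le_coe.2 (le_top : (2 : ℕ∞) ≤ ⊤))
  simpa using hs (1, 0) (0, 1)

/-- if `M` solves RKdV and `Φ` satisfies the spatial part of the RKdV
scalar Lax pair, then `W = Φ_T − (M²M_yy + M·M_y² − M² + 4λM)Φ_y + M·M_y·Φ`
satisfies the same spatial spectral equation. -/
theorem RKdV_Lax_compatibility (M Φ : ℝ → ℝ → ℝ) (lam : ℝ)
    (hM : Smooth2 M) (hΦ : Smooth2 Φ)
    (hne : ∀ y T, M y T ≠ 0)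
    (hRKdV : ∀ y T, d2 M y T
      + d1 (fun y T => (M y T) ^ 3 * (d1 (d1 M) y T - 1)) y T = 0)
    (hspec : ∀ y T, d1 (d1 Φ) y T =
      -(d1 M y T / M y T) * d1 Φ y T + ((M y T - lam) / (M y T) ^ 2) * Φ y T) :
    ∀ y T,
      d1 (d1 (fun y T =>
          d2 Φ y T
            - ((M y T) ^ 2 * d1 (d1 M) y T + M y T * (d1 M y T) ^ 2
                - (M y T) ^ 2 + 4 * lam * M y T) * d1 Φ y T
            + M y T * d1 M y T * Φ y T)) y T
        = -(d1 M y T / M y T) *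
            d1 (fun y T =>
              d2 Φ y T
                - ((M y T) ^ 2 * d1 (d1 M) y T + M y T * (d1 M y T) ^ 2
                    - (M y T) ^ 2 + 4 * lam * M y T) * d1 Φ y T
                + M y T * d1 M y T * Φ y T) y T
          + ((M y T - lam) / (M y T) ^ 2) *
            (d2 Φ y T
              - ((M y T) ^ 2 * d1 (d1 M) y T + M y T * (d1 M y T) ^ 2
                  - (M y T) ^ 2 + 4 * lam * M y T) * d1 Φ y T
              + M y T * d1 M y T * Φ y T) := by
  have m0 := aux_h1 hM
  have m1 := aux_h1 (aux_s1 hM)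
  have m2 := aux_h1 (aux_s1 (aux_s1 hM))
  have m3 := aux_h1 (aux_s1 (aux_s1 (aux_s1 hM)))
  have f0 := aux_h1 hΦ
  have f1 := aux_h1 (aux_s1 hΦ)
  have f2 := aux_h1 (aux_s1 (aux_s1 hΦ))
  have g0 := aux_h1 (aux_s2 hΦ)
  have g1 := aux_h1 (aux_s1 (aux_s2 hΦ))
  have hMT : ∀ y T, d2 M y T = -(3 * M y T ^ 2 * d1 M y T * (d1 (d1 M) y T - 1)
      + M y T ^ 3 * d1 (d1 (d1 M)) y T) := by
    intro y T
    have h := hRKdV y T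
    have e : d1 (fun y T => (M y T) ^ 3 * (d1 (d1 M) y T - 1)) y T = _ :=
      (((m0 y T).pow 3).mul ((m2 y T).sub_const 1)).deriv
    rw [e] at h
    simp only [Pi.pow_apply] at h
    push_cast at h
    linear_combination h
  have hMTy : ∀ y T, d2 (d1 M) y T =
      -(6 * M y T * d1 M y T ^ 2 * (d1 (d1 M) y T - 1)
        + 3 * M y T ^ 2 * d1 (d1 M) y T * (d1 (d1 M) y T - 1)
        + 6 * M y T ^ 2 * d1 M y T * d1 (d1 (d1 M)) y T
        + M y T ^ 3 * d1 (d1 (d1 (d1 M))) y T) := by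
    intro y T
    rw [← aux_comm hM]
    have e0 : d2 M = fun y T => -(3 * M y T ^ 2 * d1 M y T * (d1 (d1 M) y T - 1)
      + M y T ^ 3 * d1 (d1 (d1 M)) y T) := by
      funext y T; exact hMT y T
    rw [e0]
    refine (HasDerivAt.deriv (((((((m0 y T).pow 2).const_mul 3).mul (m1 y T)).mul
      ((m2 y T).sub_const 1)).add (((m0 y T).pow 3).mul (m3 y T))).neg)).trans ?_
    simp only [Pi.pow_apply, Pi.mul_apply]
    push_cast
    ring
  have s2 : ∀ y T, M y T ^ 2 * d1 (d1 Φ) y T + M y T * d1 M y T * d1 Φ y T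
      - (M y T - lam) * Φ y T = 0 := by
    intro y T
    have := hne y T
    rw [hspec]
    field_simp
    ring
  have s3 : ∀ y T, M y T ^ 2 * d1 (d1 (d1 Φ)) y T + 3 * M y T * d1 M y T * d1 (d1 Φ) y T
      + (d1 M y T ^ 2 + M y T * d1 (d1 M) y T) * d1 Φ y T
      - d1 M y T * Φ y T - (M y T - lam) * d1 Φ y T = 0 := by
    intro y T
    have h := ((((m0 y T).pow 2).mul (f2 y T)).add
      (((m0 y T).mul (m1 y T)).mul (f1 y T))).sub (((m0 y T).sub_const lam).mul (f0 y T))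
    have hder := h.unique ((hasDerivAt_const y (0 : ℝ)).congr_of_eventuallyEq
      (Filter.Eventually.of_forall fun a => s2 a T))
    simp only [Pi.pow_apply, Pi.mul_apply] at hder
    push_cast at hder
    linear_combination hder
  have c1 : ∀ y T, d1 (d2 Φ) y T = d2 (d1 Φ) y T := aux_comm hΦ
  have c2 : ∀ y T, d1 (d1 (d2 Φ)) y T = d2 (d1 (d1 Φ)) y T := by
    intro y T
    have : d1 (d2 Φ) = d2 (d1 Φ) := by funext y T; exact c1 y T
    rw [this]; exact aux_comm (aux_s1 hΦ) y T
  have sT : ∀ y T, M y T ^ 2 * d1 (d1 (d2 Φ)) y T + 2 * M y T * d2 M y T * d1 (d1 Φ) y T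
      + (d2 M y T * d1 M y T + M y T * d2 (d1 M) y T) * d1 Φ y T
      + M y T * d1 M y T * d1 (d2 Φ) y T
      - d2 M y T * Φ y T - (M y T - lam) * d2 Φ y T = 0 := by
    intro y T
    rw [c1, c2]
    have n0 := aux_h2 hM y T
    have n1 := aux_h2 (aux_s1 hM) y T
    have p0 := aux_h2 hΦ y T
    have p1 := aux_h2 (aux_s1 hΦ) y T
    have p2 := aux_h2 (aux_s1 (aux_s1 hΦ)) y T
    have h := (((n0.pow 2).mul p2).add ((n0.mul n1).mul p1)).sub ((n0.sub_const lam).mul p0)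
    have hder := h.unique ((hasDerivAt_const T (0 : ℝ)).congr_of_eventuallyEq
      (Filter.Eventually.of_forall fun b => s2 y b))
    simp only [Pi.pow_apply, Pi.mul_apply] at hder
    push_cast at hder
    linear_combination hder
  have w1 : ∀ y T, d1 (fun y T =>
          d2 Φ y T
            - ((M y T) ^ 2 * d1 (d1 M) y T + M y T * (d1 M y T) ^ 2
                - (M y T) ^ 2 + 4 * lam * M y T) * d1 Φ y T
            + M y T * d1 M y T * Φ y T) y T =
      d1 (d2 Φ) y T
        - (4 * M y T * d1 M y T * d1 (d1 M) y T + M y T ^ 2 * d1 (d1 (d1 M)) y T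
            + d1 M y T ^ 3 - 2 * M y T * d1 M y T + 4 * lam * d1 M y T) * d1 Φ y T
        - (M y T ^ 2 * d1 (d1 M) y T + M y T * d1 M y T ^ 2
            - M y T ^ 2 + 4 * lam * M y T) * d1 (d1 Φ) y T
        + (d1 M y T ^ 2 + M y T * d1 (d1 M) y T) * Φ y T
        + M y T * d1 M y T * d1 Φ y T := by
    intro y T
    refine (HasDerivAt.deriv (((g0 y T).sub (((((((m0 y T).pow 2).mul (m2 y T)).add
      ((m0 y T).mul ((m1 y T).pow 2))).sub ((m0 y T).pow 2)).add
      ((m0 y T).const_mul (4 * lam))).mul (f1 y T))).add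
      (((m0 y T).mul (m1 y T)).mul (f0 y T)))).trans ?_
    simp only [Pi.pow_apply, Pi.mul_apply, Pi.add_apply, Pi.sub_apply]
    push_cast
    ring
  intro y T
  have w2 : d1 (d1 (fun y T =>
          d2 Φ y T
            - ((M y T) ^ 2 * d1 (d1 M) y T + M y T * (d1 M y T) ^ 2
                - (M y T) ^ 2 + 4 * lam * M y T) * d1 Φ y T
            + M y T * d1 M y T * Φ y T)) y T =
      d1 (d1 (d2 Φ)) y T
        - (4 * d1 M y T ^ 2 * d1 (d1 M) y T + 4 * M y T * d1 (d1 M) y T ^ 2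
            + 4 * M y T * d1 M y T * d1 (d1 (d1 M)) y T
            + 2 * M y T * d1 M y T * d1 (d1 (d1 M)) y T + M y T ^ 2 * d1 (d1 (d1 (d1 M))) y T
            + 3 * d1 M y T ^ 2 * d1 (d1 M) y T - 2 * d1 M y T ^ 2 - 2 * M y T * d1 (d1 M) y T
            + 4 * lam * d1 (d1 M) y T) * d1 Φ y T
        - 2 * (4 * M y T * d1 M y T * d1 (d1 M) y T + M y T ^ 2 * d1 (d1 (d1 M)) y T
            + d1 M y T ^ 3 - 2 * M y T * d1 M y T + 4 * lam * d1 M y T) * d1 (d1 Φ) y T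
        - (M y T ^ 2 * d1 (d1 M) y T + M y T * d1 M y T ^ 2
            - M y T ^ 2 + 4 * lam * M y T) * d1 (d1 (d1 Φ)) y T
        + (3 * d1 M y T * d1 (d1 M) y T + M y T * d1 (d1 (d1 M)) y T) * Φ y T
        + 2 * (d1 M y T ^ 2 + M y T * d1 (d1 M) y T) * d1 Φ y T
        + M y T * d1 M y T * d1 (d1 Φ) y T := by
    rw [show d1 (fun y T =>
          d2 Φ y T
            - ((M y T) ^ 2 * d1 (d1 M) y T + M y T * (d1 M y T) ^ 2
                - (M y T) ^ 2 + 4 * lam * M y T) * d1 Φ y T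
            + M y T * d1 M y T * Φ y T) = _ from funext fun y => funext fun T => w1 y T]
    have q1 := ((m0 y T).const_mul 4).mul (m1 y T) |>.mul (m2 y T)
      |>.add (((m0 y T).pow 2).mul (m3 y T)) |>.add ((m1 y T).pow 3)
      |>.sub (((m0 y T).const_mul 2).mul (m1 y T)) |>.add ((m1 y T).const_mul (4 * lam))
      |>.mul (f1 y T)
    have q2 := ((m0 y T).pow 2).mul (m2 y T) |>.add ((m0 y T).mul ((m1 y T).pow 2))
      |>.sub ((m0 y T).pow 2) |>.add ((m0 y T).const_mul (4 * lam)) |>.mul (f2 y T)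
    have q3 := ((m1 y T).pow 2).add ((m0 y T).mul (m2 y T)) |>.mul (f0 y T)
    have q4 := ((m0 y T).mul (m1 y T)).mul (f1 y T)
    refine (HasDerivAt.deriv (((((g1 y T).sub q1).sub q2).add q3).add q4)).trans ?_
    simp only [Pi.pow_apply, Pi.mul_apply, Pi.add_apply, Pi.sub_apply]
    push_cast
    ring
  rw [w2, w1]
  have h2 := hspec y T
  have h3 := s3 y T
  have hT := sT y T
  rw [hMT, hMTy] at hT
  have hm := hne y T
  generalize d1 (d1 (d2 Φ)) y T = G2 at *
  generalize d1 (d2 Φ) y T = G1 at *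
  generalize d2 Φ y T = G0 at *
  generalize d1 (d1 (d1 Φ)) y T = F3 at *
  generalize d1 (d1 Φ) y T = F2 at *
  generalize d1 Φ y T = F1 at *
  generalize Φ y T = F0 at *
  generalize d1 (d1 (d1 (d1 M))) y T = M4 at *
  generalize d1 (d1 (d1 M)) y T = M3 at *
  generalize d1 (d1 M) y T = M2 at *
  generalize d1 M y T = M1 at *
  generalize M y T = M0 at *
  clear * - h2 h3 hT hm
  have hF3 : F3 = -(3 * M0 * M1 * F2 + (M1 ^ 2 + M0 * M2) * F1 - M1 * F0
      - (M0 - lam) * F1) / M0 ^ 2 := by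
    field_simp
    linear_combination h3
  have hG2 : G2 = -(2 * M0 * (-(3 * M0 ^ 2 * M1 * (M2 - 1) + M0 ^ 3 * M3)) * F2
      + ((-(3 * M0 ^ 2 * M1 * (M2 - 1) + M0 ^ 3 * M3)) * M1
        + M0 * (-(6 * M0 * M1 ^ 2 * (M2 - 1) + 3 * M0 ^ 2 * M2 * (M2 - 1)
        + 6 * M0 ^ 2 * M1 * M3 + M0 ^ 3 * M4))) * F1 + M0 * M1 * G1
      - (-(3 * M0 ^ 2 * M1 * (M2 - 1) + M0 ^ 3 * M3)) * F0 - (M0 - lam) * G0) / M0 ^ 2 := by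
    field_simp
    linear_combination hT
  rw [hG2, hF3, h2]
  field_simp
  ring
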